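/- Let 0 < A ≤ B < ∞. Suppose that for every finite subset F ⊆ I and every family of trigonometric polynomials (P_i)_{i∈F} (i.e., finite linear combinations of the characters e_m, m ∈ ℤ^r) the inequalities A ∫_{𝕋^r} Σ_{i∈F} |P_i(σ)|² dσ ≤ ∫_{𝕋^r} ‖Σ_{i∈F} P_i(σ) g_i(σ)‖²_H dσ ≤ B ∫_{𝕋^r} Σ_{i∈F} |P_i(σ)|² dσ hold. Then for every finite subset F ⊆ I and every family of bounded measurable functions m_i : 𝕋^r → ℂ (i ∈ F), the inequalities A ∫_{𝕋^r} Σ_{i∈F} |m_i(σ)|² dσ ≤ ∫_{𝕋^r} ‖Σ_{i∈F} m_i(σ) g_i(σ)‖²_H dσ ≤ B ∫_{𝕋^r} Σ_{i∈F} |m_i(σ)|² dσ hold. -/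

import Mathlib

open MeasureTheory
open scoped ENNReal NNReal

noncomputable section

/-- The unit cube `[0,1)^r` in `ℝ^r`. -/
def cube (r : ℕ) : Set (Fin r → ℝ) := Set.univ.pi fun _ => Set.Ico (0 : ℝ) 1

/-- Lebesgue measure on the torus `𝕋^r`, identified with the cube `[0,1)^r`. -/
def torusMeasure (r : ℕ) : Measure (Fin r → ℝ) := volume.restrict (cube r)

/-- The character `e_m(σ) = exp(2πi⟨m,σ⟩)` on `𝕋^r`. -/
def char {r : ℕ} (m : Fin r → ℤ) (σ : Fin r → ℝ) : ℂ :=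
  Complex.exp (2 * (Real.pi : ℂ) * Complex.I * ∑ j, (m j : ℂ) * (σ j : ℂ))

/-!
Convergence of trigonometric polynomials `P → w` in `L²((1 + ‖g‖²) dσ)` amounts to convergence of
both `P → w` and `P • g → w • g` in `L²(dσ)`. The weighted measure is finite, so by
Stone–Weierstrass on the torus the trigonometric polynomials are dense in its `L²` space. The
integrals involved are continuous in the pairs `(P i, P i • g i)`, so the inequalities pass to the
limit.
-/

open Filter
open scoped Topology

section LpConvergence

variable {α ι κ E : Type*} [MeasurableSpace α] {μ : Measure α} [NormedAddCommGroup E]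
  {p : ℝ≥0∞} {l : Filter κ} {F : Finset ι}

lemma eLpNorm_two_sq_eq_lintegral_enorm (f : α → E) :
    eLpNorm f 2 μ ^ 2 = ∫⁻ x, ‖f x‖ₑ ^ 2 ∂μ := by
  simpa using eLpNorm_nnreal_pow_eq_lintegral (f := f) (μ := μ) (p := 2) two_ne_zero

lemma tendsto_eLpNorm_of_tendsto_eLpNorm_sub [Fact (1 ≤ p)] {u : κ → α → E} {f : α → E}
    (hu : ∀ n, MemLp (u n) p μ) (hf : MemLp f p μ)
    (huf : Tendsto (fun n => eLpNorm (u n - f) p μ) l (𝓝 0)) :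
    Tendsto (fun n => eLpNorm (u n) p μ) l (𝓝 (eLpNorm f p μ)) := by
  simpa only [Lp.enorm_toLp] using ((Lp.tendsto_Lp_iff_tendsto_eLpNorm'' u hu f hf).2 huf).enorm

lemma tendsto_eLpNorm_sum_sub_sum (hp : 1 ≤ p) {u : κ → ι → α → E} {f : ι → α → E}
    (hu : ∀ n, ∀ i ∈ F, AEStronglyMeasurable (u n i) μ)
    (hf : ∀ i ∈ F, AEStronglyMeasurable (f i) μ)
    (huf : ∀ i ∈ F, Tendsto (fun n => eLpNorm (u n i - f i) p μ) l (𝓝 0)) :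
    Tendsto (fun n => eLpNorm (∑ i ∈ F, u n i - ∑ i ∈ F, f i) p μ) l (𝓝 0) := by
  have hsum : Tendsto (fun n => ∑ i ∈ F, eLpNorm (u n i - f i) p μ) l (𝓝 0) := by
    simpa only [Finset.sum_const_zero] using tendsto_finsetSum F huf
  refine tendsto_of_tendsto_of_tendsto_of_le_of_le tendsto_const_nhds hsum
    (fun _ => zero_le) fun n => ?_
  rw [← Finset.sum_sub_distrib]
  exact eLpNorm_sum_le (fun i hi => (hu n i hi).sub (hf i hi)) hp

lemma tendsto_lintegral_sum_enorm_sq {u : κ → ι → α → E} {f : ι → α → E}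
    (hu : ∀ n, ∀ i ∈ F, MemLp (u n i) 2 μ) (hf : ∀ i ∈ F, MemLp (f i) 2 μ)
    (huf : ∀ i ∈ F, Tendsto (fun n => eLpNorm (u n i - f i) 2 μ) l (𝓝 0)) :
    Tendsto (fun n => ∫⁻ x, ∑ i ∈ F, ‖u n i x‖ₑ ^ 2 ∂μ) l
      (𝓝 (∫⁻ x, ∑ i ∈ F, ‖f i x‖ₑ ^ 2 ∂μ)) := by
  have lintegral_sum : ∀ v : ι → α → E, (∀ i ∈ F, MemLp (v i) 2 μ) →
      ∫⁻ x, ∑ i ∈ F, ‖v i x‖ₑ ^ 2 ∂μ = ∑ i ∈ F, eLpNorm (v i) 2 μ ^ 2 := fun v hv => by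
    simp only [eLpNorm_two_sq_eq_lintegral_enorm]
    exact lintegral_finsetSum' F fun i hi => (hv i hi).1.enorm.pow_const 2
  simp only [lintegral_sum _ hf, fun n => lintegral_sum _ (hu n)]
  exact tendsto_finsetSum F fun i hi => ENNReal.Tendsto.pow <|
    tendsto_eLpNorm_of_tendsto_eLpNorm_sub (fun n => hu n i hi) (hf i hi) (huf i hi)

lemma tendsto_lintegral_enorm_sum_sq {u : κ → ι → α → E} {f : ι → α → E}
    (hu : ∀ n, ∀ i ∈ F, MemLp (u n i) 2 μ) (hf : ∀ i ∈ F, MemLp (f i) 2 μ)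
    (huf : ∀ i ∈ F, Tendsto (fun n => eLpNorm (u n i - f i) 2 μ) l (𝓝 0)) :
    Tendsto (fun n => ∫⁻ x, ‖∑ i ∈ F, u n i x‖ₑ ^ 2 ∂μ) l
      (𝓝 (∫⁻ x, ‖∑ i ∈ F, f i x‖ₑ ^ 2 ∂μ)) := by
  simp only [← Finset.sum_apply, ← eLpNorm_two_sq_eq_lintegral_enorm]
  exact ENNReal.Tendsto.pow <| tendsto_eLpNorm_of_tendsto_eLpNorm_sub
    (fun n => memLp_finsetSum' F (hu n)) (memLp_finsetSum' F hf) <|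
    tendsto_eLpNorm_sum_sub_sum one_le_two (fun n i hi => (hu n i hi).1)
      (fun i hi => (hf i hi).1) huf

end LpConvergence

section Weight

variable {α 𝕜 E : Type*} [MeasurableSpace α] {μ ν : Measure α} [NormedAddCommGroup E] {p : ℝ≥0∞}

lemma memLp_add_measure (hp₀ : p ≠ 0) (hp : p ≠ ∞) {f : α → E}
    (hμ : MemLp f p μ) (hν : MemLp f p ν) : MemLp f p (μ + ν) := by
  refine ⟨hμ.1.add_measure hν.1, ?_⟩
  rw [eLpNorm_lt_top_iff_lintegral_rpow_enorm_lt_top hp₀ hp, lintegral_add_measure]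
  exact ENNReal.add_lt_top.2
    ⟨lintegral_rpow_enorm_lt_top_of_eLpNorm_lt_top hp₀ hp hμ.2,
      lintegral_rpow_enorm_lt_top_of_eLpNorm_lt_top hp₀ hp hν.2⟩

lemma eLpNorm_withDensity_enorm_rpow [NormedField 𝕜] [NormedSpace 𝕜 E] (hp₀ : p ≠ 0) (hp : p ≠ ∞)
    (f : α → 𝕜) {g : α → E} (hg : AEStronglyMeasurable g μ) :
    eLpNorm f p (μ.withDensity fun x => ‖g x‖ₑ ^ p.toReal) = eLpNorm (f • g) p μ := by
  have density_lt_top : ∀ x, ‖g x‖ₑ ^ p.toReal < ∞ := fun x =>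
    ENNReal.rpow_lt_top_of_nonneg ENNReal.toReal_nonneg enorm_ne_top
  simp only [eLpNorm_eq_lintegral_rpow_enorm_toReal hp₀ hp]
  rw [lintegral_withDensity_eq_lintegral_mul_non_measurable₀ _ (hg.enorm.pow_const _)
    (.of_forall density_lt_top)]
  simp only [Pi.mul_apply, Pi.smul_apply', enorm_smul,
    ENNReal.mul_rpow_of_nonneg _ _ ENNReal.toReal_nonneg, mul_comm]

end Weight

lemma exists_mem_eLpNorm_sub_lt_of_dense {X E : Type*} [TopologicalSpace X] [CompactSpace X]
    [NormalSpace X] [MeasurableSpace X] [BorelSpace X] [NormedAddCommGroup E] [NormedSpace ℝ E]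
    [SecondCountableTopologyEither X E] {p : ℝ≥0∞} [Fact (1 ≤ p)] (hp : p ≠ ∞) {μ : Measure X}
    [IsFiniteMeasure μ] [μ.WeaklyRegular] {S : Set C(X, E)} (hS : Dense S) {f : X → E}
    (hf : MemLp f p μ) {ε : ℝ≥0∞} (hε : 0 < ε) :
    ∃ φ ∈ S, eLpNorm (⇑φ - f) p μ < ε := by
  have dense_image : Dense (ContinuousMap.toLp (E := E) p μ ℝ '' S) :=
    (ContinuousMap.toLp_denseRange E μ ℝ hp).dense_image (ContinuousLinearMap.continuous _) hS
  obtain ⟨_, ⟨φ, hφ, rfl⟩, hlt⟩ := EMetric.mem_closure_iff.1 (dense_image (hf.toLp f)) ε hε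
  refine ⟨φ, hφ, ?_⟩
  rwa [edist_comm, Lp.edist_def,
    eLpNorm_congr_ae ((ContinuousMap.coeFn_toLp μ φ).sub hf.coeFn_toLp)] at hlt

section Torus

variable {r : ℕ} {μ : Measure (Fin r → ℝ)} {p : ℝ≥0∞}

/-- The trigonometric polynomial `∑ₘ c(m) eₘ` on `ℝ^r`. -/
def trigPoly (c : (Fin r → ℤ) →₀ ℂ) (σ : Fin r → ℝ) : ℂ :=
  c.sum fun m z => z * char m σ

/-- The quotient map `ℝ^r → ℝ^r / ℤ^r`. -/
def toTorus (σ : Fin r → ℝ) : UnitAddTorus (Fin r) := fun j => (σ j : UnitAddCircle)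

/-- The section of `toTorus` with values in the cube `[0,1)^r`. -/
def ofTorus (t : UnitAddTorus (Fin r)) : Fin r → ℝ := fun j => AddCircle.equivIco 1 0 (t j)

lemma measurable_toTorus : Measurable (toTorus (r := r)) :=
  measurable_pi_lambda _ fun j => AddCircle.measurable_mk'.comp (measurable_pi_apply j)

lemma measurable_ofTorus : Measurable (ofTorus (r := r)) :=
  measurable_pi_lambda _ fun j => measurable_subtype_coe.comp
    ((AddCircle.measurableEquivIco 1 0).measurable.comp (measurable_pi_apply j))

lemma ofTorus_toTorus {σ : Fin r → ℝ} (hσ : σ ∈ cube r) : ofTorus (toTorus σ) = σ := by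
  funext j
  have hj : σ j ∈ Set.Ico (0 : ℝ) (0 + 1) := by simpa only [zero_add] using hσ j (Set.mem_univ j)
  simp only [ofTorus, toTorus, AddCircle.equivIco_coe_eq hj]

lemma measurePreserving_ofTorus (hμ : ∀ᵐ σ ∂μ, σ ∈ cube r) :
    MeasurePreserving ofTorus (μ.map toTorus) μ := by
  refine ⟨measurable_ofTorus, ?_⟩
  rw [Measure.map_map measurable_ofTorus measurable_toTorus]
  exact (Measure.map_congr (hμ.mono fun σ hσ => ofTorus_toTorus hσ)).trans Measure.map_id

lemma char_eq_mFourier_toTorus (m : Fin r → ℤ) (σ : Fin r → ℝ) :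
    char m σ = UnitAddTorus.mFourier m (toTorus σ) := by
  simp only [UnitAddTorus.mFourier, toTorus, ContinuousMap.coe_mk, fourier_coe_apply, char,
    ← Complex.exp_sum, Finset.mul_sum, Complex.ofReal_one, div_one]
  exact congrArg Complex.exp (Finset.sum_congr rfl fun j _ => by ring)

lemma trigPoly_eq_sum_mFourier_toTorus (c : (Fin r → ℤ) →₀ ℂ) (σ : Fin r → ℝ) :
    trigPoly c σ = (c.sum fun m z => z • UnitAddTorus.mFourier m) (toTorus σ) := by
  simp only [trigPoly, char_eq_mFourier_toTorus, Finsupp.sum, ContinuousMap.sum_apply,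
    ContinuousMap.smul_apply, smul_eq_mul]

lemma memLp_top_trigPoly (c : (Fin r → ℤ) →₀ ℂ) : MemLp (trigPoly c) ∞ μ := by
  set φ : C(UnitAddTorus (Fin r), ℂ) := c.sum fun m z => z • UnitAddTorus.mFourier m
  have trigPoly_eq : trigPoly c = φ ∘ toTorus := funext (trigPoly_eq_sum_mFourier_toTorus c)
  rw [trigPoly_eq]
  exact memLp_top_of_bound (φ.continuous.measurable.comp measurable_toTorus).aestronglyMeasurable
    ‖φ‖ (.of_forall fun _ => φ.norm_coe_le_norm _)

lemma exists_trigPoly_eLpNorm_sub_lt [Fact (1 ≤ p)] (hp : p ≠ ∞) [IsFiniteMeasure μ]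
    (hμ : ∀ᵐ σ ∂μ, σ ∈ cube r) {f : (Fin r → ℝ) → ℂ} (hf : MemLp f p μ) {ε : ℝ≥0∞} (hε : 0 < ε) :
    ∃ c, eLpNorm (trigPoly c - f) p μ < ε := by
  have lifted_memLp : MemLp (f ∘ ofTorus) p (μ.map toTorus) :=
    hf.comp_measurePreserving (measurePreserving_ofTorus hμ)
  have mFourier_dense := Submodule.dense_iff_topologicalClosure_eq_top.2
    (UnitAddTorus.span_mFourier_closure_eq_top (d := Fin r))
  obtain ⟨φ, hφ, hlt⟩ := exists_mem_eLpNorm_sub_lt_of_dense hp mFourier_dense lifted_memLp hε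
  obtain ⟨c, rfl⟩ := Finsupp.mem_span_range_iff_exists_finsupp.1 hφ
  refine ⟨c, ?_⟩
  rw [eLpNorm_map_measure ((ContinuousMap.continuous _).aestronglyMeasurable.sub lifted_memLp.1)
    measurable_toTorus.aemeasurable] at hlt
  refine (eLpNorm_congr_ae ?_).trans_lt hlt
  filter_upwards [hμ] with σ hσ
  simp only [Pi.sub_apply, Function.comp_apply, ofTorus_toTorus hσ,
    trigPoly_eq_sum_mFourier_toTorus]

variable {H : Type*} [NormedAddCommGroup H] [NormedSpace ℂ H]

lemma exists_trigPoly_eLpNorm_sub_lt_and_smul_lt [Fact (1 ≤ p)] (hp : p ≠ ∞) [IsFiniteMeasure μ]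
    (hμ : ∀ᵐ σ ∂μ, σ ∈ cube r) {f : (Fin r → ℝ) → ℂ} {g : (Fin r → ℝ) → H} (hf : MemLp f p μ)
    (hg : MemLp g p μ) (hfg : MemLp (f • g) p μ) {ε : ℝ≥0∞} (hε : 0 < ε) :
    ∃ c, eLpNorm (trigPoly c - f) p μ < ε ∧ eLpNorm (trigPoly c • g - f • g) p μ < ε := by
  have hp₀ : p ≠ 0 := (zero_lt_one.trans_le Fact.out).ne'
  set ν := μ.withDensity fun σ => ‖g σ‖ₑ ^ p.toReal
  have ν_ac : ν ≪ μ := withDensity_absolutelyContinuous _ _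
  have eLpNorm_ν : ∀ u : (Fin r → ℝ) → ℂ, eLpNorm u p ν = eLpNorm (u • g) p μ := fun u =>
    eLpNorm_withDensity_enorm_rpow hp₀ hp u hg.1
  have : IsFiniteMeasure ν := isFiniteMeasure_withDensity
    (lintegral_rpow_enorm_lt_top_of_eLpNorm_lt_top hp₀ hp hg.2).ne
  have f_memLp : MemLp f p (μ + ν) :=
    memLp_add_measure hp₀ hp hf ⟨hf.1.mono_ac ν_ac, (eLpNorm_ν f).trans_lt hfg.2⟩
  obtain ⟨c, hc⟩ := exists_trigPoly_eLpNorm_sub_lt hp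
    (ae_add_measure_iff.2 ⟨hμ, ν_ac.ae_le hμ⟩) f_memLp hε
  refine ⟨c, (eLpNorm_le_add_measure_right _ _ _).trans_lt hc, ?_⟩
  rw [← sub_smul, ← eLpNorm_ν]
  exact (eLpNorm_le_add_measure_left _ _ _).trans_lt hc

lemma exists_seq_trigPoly_tendsto_eLpNorm_sub [Fact (1 ≤ p)] (hp : p ≠ ∞) [IsFiniteMeasure μ]
    (hμ : ∀ᵐ σ ∂μ, σ ∈ cube r) {f : (Fin r → ℝ) → ℂ} {g : (Fin r → ℝ) → H} (hf : MemLp f p μ)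
    (hg : MemLp g p μ) (hfg : MemLp (f • g) p μ) :
    ∃ c : ℕ → (Fin r → ℤ) →₀ ℂ,
      Tendsto (fun n => eLpNorm (trigPoly (c n) - f) p μ) atTop (𝓝 0) ∧
      Tendsto (fun n => eLpNorm (trigPoly (c n) • g - f • g) p μ) atTop (𝓝 0) := by
  choose c hc hcg using fun n : ℕ => exists_trigPoly_eLpNorm_sub_lt_and_smul_lt hp hμ hf hg hfg
    (ε := (n : ℝ≥0∞)⁻¹) (ENNReal.inv_pos.2 (ENNReal.natCast_ne_top n))
  exact ⟨c, tendsto_of_tendsto_of_tendsto_of_le_of_le tendsto_const_nhds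
      ENNReal.tendsto_inv_nat_nhds_zero (fun _ => zero_le) fun n => (hc n).le,
    tendsto_of_tendsto_of_tendsto_of_le_of_le tendsto_const_nhds
      ENNReal.tendsto_inv_nat_nhds_zero (fun _ => zero_le) fun n => (hcg n).le⟩

theorem riesz_polynomials_to_bounded_measurable_general [IsFiniteMeasure μ]
    (hμ : ∀ᵐ σ ∂μ, σ ∈ cube r) {ι : Type*} {F : Finset ι} {g : ι → (Fin r → ℝ) → H}
    (hg : ∀ i ∈ F, MemLp (g i) 2 μ) {A B : ℝ≥0}
    (hpoly : ∀ c : ι → (Fin r → ℤ) →₀ ℂ,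
      A * ∫⁻ σ, ∑ i ∈ F, ‖trigPoly (c i) σ‖ₑ ^ 2 ∂μ ≤
        ∫⁻ σ, ‖∑ i ∈ F, trigPoly (c i) σ • g i σ‖ₑ ^ 2 ∂μ ∧
      ∫⁻ σ, ‖∑ i ∈ F, trigPoly (c i) σ • g i σ‖ₑ ^ 2 ∂μ ≤
        B * ∫⁻ σ, ∑ i ∈ F, ‖trigPoly (c i) σ‖ₑ ^ 2 ∂μ)
    {w : ι → (Fin r → ℝ) → ℂ} (hw : ∀ i ∈ F, MemLp (w i) 2 μ)
    (hwg : ∀ i ∈ F, MemLp (w i • g i) 2 μ) :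
    A * ∫⁻ σ, ∑ i ∈ F, ‖w i σ‖ₑ ^ 2 ∂μ ≤ ∫⁻ σ, ‖∑ i ∈ F, w i σ • g i σ‖ₑ ^ 2 ∂μ ∧
      ∫⁻ σ, ‖∑ i ∈ F, w i σ • g i σ‖ₑ ^ 2 ∂μ ≤ B * ∫⁻ σ, ∑ i ∈ F, ‖w i σ‖ₑ ^ 2 ∂μ := by
  choose! c hc hcg using fun i hi => exists_seq_trigPoly_tendsto_eLpNorm_sub ENNReal.ofNat_ne_top
    hμ (hw i hi) (hg i hi) (hwg i hi)
  have coeff_tendsto := tendsto_lintegral_sum_enorm_sq (u := fun n i => trigPoly (c i n))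
    (fun n i _ => (memLp_top_trigPoly (c i n)).mono_exponent le_top) hw hc
  have synthesis_tendsto := tendsto_lintegral_enorm_sum_sq
    (u := fun n i => trigPoly (c i n) • g i)
    (fun n i hi => (hg i hi).smul (memLp_top_trigPoly (c i n))) hwg hcg
  have const_mul_tendsto (a : ℝ≥0) :=
    ENNReal.Tendsto.const_mul coeff_tendsto (.inr (ENNReal.coe_ne_top (r := a)))
  exact ⟨le_of_tendsto_of_tendsto' (const_mul_tendsto A) synthesis_tendsto
      fun n => (hpoly fun i => c i n).1,
    le_of_tendsto_of_tendsto' synthesis_tendsto (const_mul_tendsto B)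
      fun n => (hpoly fun i => c i n).2⟩

instance : IsFiniteMeasure (torusMeasure r) := by
  refine ⟨?_⟩
  rw [torusMeasure, Measure.restrict_apply_univ, cube, Real.volume_pi_Ico]
  exact ENNReal.prod_lt_top fun _ _ => ENNReal.ofReal_lt_top

lemma ae_torusMeasure_mem_cube : ∀ᵐ σ ∂(torusMeasure r), σ ∈ cube r :=
  ae_restrict_mem (MeasurableSet.univ_pi fun _ => measurableSet_Ico)

end Torus

/-- If the two-sided inequalities hold for all finite families of trigonometric polynomials,
then they hold for all finite families of bounded measurable functions. -/
theorem riesz_polynomials_to_bounded_measurable (r : ℕ) (hr : 0 < r)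
    {H : Type} [NormedAddCommGroup H] [InnerProductSpace ℂ H] [CompleteSpace H]
    [TopologicalSpace.SeparableSpace H]
    {I : Type} [Countable I]
    (g : I → Lp H 2 (torusMeasure r))
    (A B : ℝ) (hA : 0 < A) (hAB : A ≤ B)
    (hpoly : ∀ (F : Finset I) (c : I → ((Fin r → ℤ) →₀ ℂ)),
      ENNReal.ofReal A *
          ∫⁻ σ, (∑ i ∈ F,
            (‖(c i).sum fun m z => z * char m σ‖₊ : ℝ≥0∞) ^ 2) ∂(torusMeasure r) ≤
        ∫⁻ σ, (‖∑ i ∈ F, ((c i).sum fun m z => z * char m σ) • ⇑(g i) σ‖₊ : ℝ≥0∞) ^ 2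
          ∂(torusMeasure r) ∧
      ∫⁻ σ, (‖∑ i ∈ F, ((c i).sum fun m z => z * char m σ) • ⇑(g i) σ‖₊ : ℝ≥0∞) ^ 2
          ∂(torusMeasure r) ≤
        ENNReal.ofReal B *
          ∫⁻ σ, (∑ i ∈ F,
            (‖(c i).sum fun m z => z * char m σ‖₊ : ℝ≥0∞) ^ 2) ∂(torusMeasure r)) :
    ∀ (F : Finset I) (w : I → (Fin r → ℝ) → ℂ),
      (∀ i ∈ F, Measurable (w i)) →
      (∀ i ∈ F, ∃ C : ℝ, ∀ σ, ‖w i σ‖ ≤ C) →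
      ENNReal.ofReal A *
          ∫⁻ σ, (∑ i ∈ F, (‖w i σ‖₊ : ℝ≥0∞) ^ 2) ∂(torusMeasure r) ≤
        ∫⁻ σ, (‖∑ i ∈ F, w i σ • ⇑(g i) σ‖₊ : ℝ≥0∞) ^ 2 ∂(torusMeasure r) ∧
      ∫⁻ σ, (‖∑ i ∈ F, w i σ • ⇑(g i) σ‖₊ : ℝ≥0∞) ^ 2 ∂(torusMeasure r) ≤
        ENNReal.ofReal B *
          ∫⁻ σ, (∑ i ∈ F, (‖w i σ‖₊ : ℝ≥0∞) ^ 2) ∂(torusMeasure r) := by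
  intro F w hwm hwb
  have w_memLp_top : ∀ i ∈ F, MemLp (w i) ∞ (torusMeasure r) := fun i hi =>
    (hwb i hi).elim fun C hC =>
      memLp_top_of_bound (hwm i hi).aestronglyMeasurable C (.of_forall hC)
  exact riesz_polynomials_to_bounded_measurable_general ae_torusMeasure_mem_cube
    (fun i _ => Lp.memLp (g i)) (hpoly F)
    (fun i hi => (w_memLp_top i hi).mono_exponent le_top)
    (fun i hi => (Lp.memLp (g i)).smul (w_memLp_top i hi))
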